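/- arXiv:2303.08160 — 2 statements merged into one kernel-verified Lean document; each statement's English description precedes it below -/
import Mathlib

section
/- The edge ideal I = I(K_V^t) of a complete t-spread d-partite hypergraph satisfies the strong persistence property, i.e., (I^{k+1} : I) = I^k for all k ≥ 1, and all powers I^k (k ≥ 1) have linear resolution. -/
/-!
The proof has two independent parts, both based on sorting. Replacing `k` edges by the edges formed
by their smallest entries in each `V j`, their second smallest entries in each `V j`, and so on,
changes neither the product of the variables nor the spread conditions. So `I ^ k` is generated by
the monomials of sorted arrays of `k` edges (`edgeIdeal_pow`).

*Strong persistence* (`colon_le_pow`). Without isolated vertices, the minima of the `V j` form an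
edge; let `u` be its monomial. If `w * u` lies in `I ^ (k + 1)`, it is divisible by the monomial of
a sorted array of `k + 1` edges. Only a vertex `min (V j)` has a smaller exponent in `w` than in
`w * u`, by one. If it still occurs after the first edge of the array, it also occurs in the first.
Omitting that edge therefore leaves a divisor of `w` in `I ^ k`.

*Linear resolutions.* Order the sorted arrays lexicographically. If `β` precedes `α`, replacing the
first entry of `α` that differs from `β` by that of `β` gives again a sorted array
(`IsSpreadArray.update`). Hence the colon ideals of the generators in this order are generated by
variables (`linQuot_spread`), and each product of such a variable with a generator is a variable
times an earlier generator.

That linear quotients imply linear resolutions is proved here in a form that can be iterated. For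
a family `z` in a free module with linear quotients (`LinQuot`), each relation
`X a • z m = ∑ k, c k • z k` with linear forms `c k` gives a linear syzygy. These generate all
syzygies (`SyzCoeff.exists_of_rel`), and in lexicographic order they again have linear quotients
(`SyzCoeff.linQuot`). A given minimal graded free resolution is compared with these iterated linear
syzygies one step at a time (`IsLinearStage.step`): two minimal generating families of the same
module differ by an invertible matrix over `K`, so they have the same degrees and, up to a change
of basis, the same relations.
-/

open MvPolynomial

noncomputable section

/-- `e : Fin d → Fin n` encodes a `𝐭`-spread edge. -/
def IsSpreadEdge (n d : ℕ) (V : Fin d → Finset (Fin n)) (t : ℕ → ℕ) (e : Fin d → Fin n) :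
    Prop :=
  (∀ j, e j ∈ V j) ∧
    ∀ (j : ℕ) (h : j + 1 < d),
      (e ⟨j, Nat.lt_of_succ_lt h⟩ : ℕ) + t j ≤ (e ⟨j + 1, h⟩ : ℕ)

/-- The set of minimal monomial generators `G(I(K_V^𝐭))`. -/
def spreadGens (K : Type) [Field K] (n d : ℕ) (V : Fin d → Finset (Fin n)) (t : ℕ → ℕ) :
    Set (MvPolynomial (Fin n) K) :=
  {m | ∃ e : Fin d → Fin n, IsSpreadEdge n d V t e ∧ m = ∏ j, X (e j)}

/-- The edge ideal `I(K_V^𝐭)`. -/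
def edgeIdeal (K : Type) [Field K] (n d : ℕ) (V : Fin d → Finset (Fin n)) (t : ℕ → ℕ) :
    Ideal (MvPolynomial (Fin n) K) :=
  Ideal.span (spreadGens K n d V t)

/-- `(r, dg, φ, ε)` is a *minimal graded free resolution* of the graded ideal `J` over
`S = K[x_1, …, x_n]`:

`⋯ → F_2 → F_1 → F_0 → J → 0`,

where `F_i` is the graded free module with basis `Fin (r i)` whose `k`-th basis element has
degree `dg i k` (i.e. `F_i = ⊕_j S(-j)^{β_{i,j}}` with `β_{i,j} = #\{k ∣ dg i k = j\}`),
the maps are graded of degree `0`, the complex is exact, and minimality means that all matrix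
entries of the differentials lie in the graded maximal ideal `(x_1, …, x_n)`.  The degrees
`dg i ·` (with multiplicity) are exactly the graded Betti numbers `β_{i,j}(J)` of `J`. -/
def IsMinimalGradedFreeResolution (K : Type) [Field K] (n : ℕ)
    (J : Ideal (MvPolynomial (Fin n) K))
    (r : ℕ → ℕ) (dg : (i : ℕ) → Fin (r i) → ℕ)
    (φ : (i : ℕ) → ((Fin (r (i + 1)) → MvPolynomial (Fin n) K) →ₗ[MvPolynomial (Fin n) K]
      (Fin (r i) → MvPolynomial (Fin n) K)))
    (ε : (Fin (r 0) → MvPolynomial (Fin n) K) →ₗ[MvPolynomial (Fin n) K]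
      MvPolynomial (Fin n) K) : Prop :=
  -- the augmentation maps `F_0` onto `J`
  LinearMap.range ε = J
  -- exactness
  ∧ LinearMap.ker ε = LinearMap.range (φ 0)
  ∧ (∀ i : ℕ, LinearMap.ker (φ i) = LinearMap.range (φ (i + 1)))
  -- the maps are graded (degree-preserving): images of basis elements are homogeneous of
  -- the right degrees
  ∧ (∀ k : Fin (r 0), (ε (Pi.single k 1)).IsHomogeneous (dg 0 k))
  ∧ (∀ (i : ℕ) (k : Fin (r (i + 1))) (j : Fin (r i)),
      φ i (Pi.single k 1) j = 0 ∨
        ∃ c : ℕ, dg (i + 1) k = dg i j + c ∧ (φ i (Pi.single k 1) j).IsHomogeneous c)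
  -- minimality: all entries of the differentials lie in `(x_1, …, x_n)`
  ∧ (∀ (i : ℕ) (k : Fin (r (i + 1))) (j : Fin (r i)),
      constantCoeff (φ i (Pi.single k 1) j) = 0)

/-! ### Linear quotients and their syzygies -/

section Syzygies

variable {K : Type} [Field K] {n : ℕ}

/-- The family `z`, indexed by a finite linear order, has linear quotients: for every `m` the colon
ideal `(z_k : k < m) : z_m` is generated by the variables `X a`, `a ∈ A m`, and each product
`X a • z m` is a combination of earlier members whose coefficients are linear forms. -/
structure LinQuot {ι κ : Type} [LinearOrder ι] [Fintype ι]
    (z : ι → κ → MvPolynomial (Fin n) K) (A : ι → Finset (Fin n)) : Prop where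
  colon_le : ∀ m f, f • z m ∈ Submodule.span (MvPolynomial (Fin n) K) (z '' Set.Iio m) →
    f ∈ Ideal.span ((X : Fin n → MvPolynomial (Fin n) K) '' (A m : Set (Fin n)))
  X_smul : ∀ m, ∀ a ∈ A m, ∃ c : ι → MvPolynomial (Fin n) K,
    (∀ k, (c k).IsHomogeneous 1) ∧ (∀ k, m ≤ k → c k = 0) ∧
    (X a : MvPolynomial (Fin n) K) • z m = ∑ k, c k • z k

/-- Index set of the linear syzygies of a family with linear quotients: the pairs `(m, a)` with
`a ∈ A m`, ordered lexicographically. -/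
abbrev SyzIdx {ι : Type} (A : ι → Finset (Fin n)) : Type :=
  {p : ι ×ₗ Fin n // (ofLex p).2 ∈ A (ofLex p).1}

/-- The first component `m` of an index `(m, a)`. -/
def SyzIdx.fst {ι : Type} {A : ι → Finset (Fin n)} (p : SyzIdx A) : ι := (ofLex p.1).1

/-- The second component `a` of an index `(m, a)`. -/
def SyzIdx.snd {ι : Type} {A : ι → Finset (Fin n)} (p : SyzIdx A) : Fin n := (ofLex p.1).2

lemma SyzIdx.snd_mem {ι : Type} {A : ι → Finset (Fin n)} (p : SyzIdx A) : p.snd ∈ A p.fst := p.2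

lemma SyzIdx.lt_iff {ι : Type} [LinearOrder ι] {A : ι → Finset (Fin n)} (p p' : SyzIdx A) :
    p < p' ↔ p.fst < p'.fst ∨ p.fst = p'.fst ∧ p.snd < p'.snd := by
  rw [← Subtype.coe_lt_coe, Prod.Lex.lt_iff]; rfl

/-- The index `(m, a)`. -/
def SyzIdx.mk {ι : Type} {A : ι → Finset (Fin n)} (m : ι) (a : Fin n) (h : a ∈ A m) : SyzIdx A :=
  ⟨toLex (m, a), h⟩

instance {ι : Type} [Fintype ι] (A : ι → Finset (Fin n)) : Fintype (SyzIdx A) :=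
  haveI : Finite (ι ×ₗ Fin n) := inferInstanceAs (Finite (ι × Fin n))
  Fintype.ofFinite _

open Classical in
/-- The linear syzygy `X a • e_m - ∑ k, c k • e_k`, where `c` are the coefficients of an expression
of `X a • z m` in terms of earlier members of the family. -/
def syz {ι : Type} {A : ι → Finset (Fin n)} (c : SyzIdx A → ι → MvPolynomial (Fin n) K)
    (p : SyzIdx A) : ι → MvPolynomial (Fin n) K :=
  (X p.snd : MvPolynomial (Fin n) K) • Pi.single p.fst 1 - c p

/-- Coefficients `c` that exhibit each `X a • z m` as a linear combination, with linear forms as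
coefficients, of earlier members of the family. -/
structure SyzCoeff {ι κ : Type} [LinearOrder ι] [Fintype ι]
    (z : ι → κ → MvPolynomial (Fin n) K) {A : ι → Finset (Fin n)}
    (c : SyzIdx A → ι → MvPolynomial (Fin n) K) : Prop where
  hom : ∀ p k, (c p k).IsHomogeneous 1
  zero : ∀ p k, p.fst ≤ k → c p k = 0
  eq : ∀ p, (X p.snd : MvPolynomial (Fin n) K) • z p.fst = ∑ k, c p k • z k

lemma LinQuot.exists_coeff {ι κ : Type} [LinearOrder ι] [Fintype ι]
    {z : ι → κ → MvPolynomial (Fin n) K} {A : ι → Finset (Fin n)} (h : LinQuot z A) :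
    ∃ c : SyzIdx A → ι → MvPolynomial (Fin n) K, SyzCoeff z c := by
  choose c h1 h2 h3 using fun p : SyzIdx A => h.X_smul p.fst p.snd p.snd_mem
  exact ⟨c, h1, h2, h3⟩

lemma homogeneousComponent_mul_of_right {f z : MvPolynomial (Fin n) K} {e : ℕ}
    (hz : z.IsHomogeneous e) (i : ℕ) :
    homogeneousComponent (i + e) (f * z) = homogeneousComponent i f * z := by
  let _ := gradedAlgebra (σ := Fin n) (R := K)
  have := DirectSum.coe_decompose_mul_add_of_right_mem
    (homogeneousSubmodule (Fin n) K) (a := f) (b := z) (i := i) (j := e) hz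
  rwa [← decomposition.decompose'_apply, ← decomposition.decompose'_apply]

lemma homogeneousComponent_mul_of_lt {f z : MvPolynomial (Fin n) K} {e D : ℕ}
    (hz : z.IsHomogeneous e) (hD : D < e) : homogeneousComponent D (f * z) = 0 := by
  let _ := gradedAlgebra (σ := Fin n) (R := K)
  have := DirectSum.coe_decompose_mul_of_right_mem_of_not_le
    (homogeneousSubmodule (Fin n) K) (a := f) (b := z) (n := D) (i := e) hz (not_le.2 hD)
  rwa [← decomposition.decompose'_apply]

/-- If the entries of `y` and of the `z k` are homogeneous, then the coefficients in an expression
of `y` through the `z k` may be replaced by their homogeneous components of the right degree. -/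
lemma sum_homogeneousComponent_smul {ι κ : Type} [Fintype ι]
    {z : ι → κ → MvPolynomial (Fin n) K} {e i : ℕ} (hz : ∀ k j, (z k j).IsHomogeneous e)
    {y : κ → MvPolynomial (Fin n) K} (hy : ∀ j, (y j).IsHomogeneous (i + e))
    {f : ι → MvPolynomial (Fin n) K} (h : y = ∑ k, f k • z k) :
    y = ∑ k, homogeneousComponent i (f k) • z k := by
  funext j
  rw [← homogeneousComponent_eq_self (hy j), h]
  simp only [Finset.sum_apply, Pi.smul_apply, smul_eq_mul, map_sum]
  exact Finset.sum_congr rfl fun k _ => homogeneousComponent_mul_of_right (hz k j) i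

/-- Nothing nonzero of degree `D < e` is generated by elements of degree `e`. -/
lemma eq_zero_of_degree_lt {ι κ : Type} [Fintype ι]
    {z : ι → κ → MvPolynomial (Fin n) K} {e D : ℕ} (hz : ∀ k j, (z k j).IsHomogeneous e)
    {y : κ → MvPolynomial (Fin n) K} (hy : ∀ j, (y j).IsHomogeneous D) (hD : D < e)
    {f : ι → MvPolynomial (Fin n) K} (h : y = ∑ k, f k • z k) : y = 0 := by
  funext j
  rw [← homogeneousComponent_eq_self (hy j), h]
  simp only [Finset.sum_apply, Pi.smul_apply, smul_eq_mul, map_sum, Pi.zero_apply]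
  exact Finset.sum_eq_zero fun k _ => homogeneousComponent_mul_of_lt (hz k j) hD

lemma mem_span_X_of_mul_X {B : Finset (Fin n)} {a : Fin n} (ha : a ∉ B)
    {f : MvPolynomial (Fin n) K}
    (h : f * X a ∈ Ideal.span ((X : Fin n → MvPolynomial (Fin n) K) '' (B : Set (Fin n)))) :
    f ∈ Ideal.span ((X : Fin n → MvPolynomial (Fin n) K) '' (B : Set (Fin n))) := by
  rw [mem_ideal_span_X_image] at h ⊢
  intro w hw
  obtain ⟨i, hi, hwi⟩ := h (w + Finsupp.single a 1) (by
    rw [mem_support_iff, coeff_mul_X]; exact mem_support_iff.1 hw)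
  refine ⟨i, hi, ?_⟩
  have : a ≠ i := fun e => ha (e ▸ hi)
  simpa [Finsupp.single_apply, this] using hwi

section

variable {ι κ : Type} [LinearOrder ι] [Fintype ι]
  {z : ι → κ → MvPolynomial (Fin n) K} {A : ι → Finset (Fin n)}
  {c : SyzIdx A → ι → MvPolynomial (Fin n) K}

lemma SyzCoeff.syz_fst (hc : SyzCoeff z c) (p : SyzIdx A) : syz c p p.fst = X p.snd := by
  simp [syz, hc.zero p p.fst le_rfl]

lemma SyzCoeff.syz_of_lt (hc : SyzCoeff z c) (p : SyzIdx A) {k : ι} (hk : p.fst < k) :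
    syz c p k = 0 := by
  simp [syz, hc.zero p k hk.le, hk.ne']

lemma SyzCoeff.syz_hom (hc : SyzCoeff z c) (p : SyzIdx A) (k : ι) :
    (syz c p k).IsHomogeneous 1 := by
  refine IsHomogeneous.sub ?_ (hc.hom p k)
  by_cases h : k = p.fst
  · subst h; simpa using isHomogeneous_X K p.snd
  · simpa [h] using isHomogeneous_zero (Fin n) K 1

lemma SyzCoeff.syz_rel (hc : SyzCoeff z c) (p : SyzIdx A) : ∑ k, syz c p k • z k = 0 := by
  simp only [syz, Pi.sub_apply, Pi.smul_apply, sub_smul, Finset.sum_sub_distrib, ← hc.eq p]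
  rw [Finset.sum_eq_single p.fst] <;> simp +contextual

/-- The linear syzygies generate all syzygies: the last nonzero coefficient of a relation lies in
the colon ideal, so it can be cancelled with linear syzygies. A relation supported on an initial
segment `s` only needs the syzygies at positions in `s`. -/
lemma SyzCoeff.exists_of_rel (hc : SyzCoeff z c) (h : LinQuot z A) (s : Finset ι) :
    IsLowerSet (s : Set ι) → ∀ f : ι → MvPolynomial (Fin n) K, (∀ k ∉ s, f k = 0) →
    ∑ k, f k • z k = 0 →
    ∃ g : SyzIdx A → MvPolynomial (Fin n) K, f = ∑ p, g p • syz c p ∧ ∀ p, p.fst ∉ s → g p = 0 := by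
  classical
  induction s using Finset.strongInduction with
  | H s ih =>
  intro hs f hf hrel
  rcases s.eq_empty_or_nonempty with rfl | hne
  · refine ⟨0, ?_, by simp⟩
    funext k; simp [hf k]
  set m := s.max' hne with hm
  have hms : m ∈ s := s.max'_mem hne
  have hlt : ∀ k ∈ s, k ≠ m → k < m := fun k hk hkm => lt_of_le_of_ne (s.le_max' k hk) hkm
  have hfm : f m ∈ Ideal.span ((X : Fin n → MvPolynomial (Fin n) K) '' (A m : Set (Fin n))) := by
    apply h.colon_le
    rw [← Finset.add_sum_erase _ _ (Finset.mem_univ m)] at hrel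
    rw [eq_neg_of_add_eq_zero_left hrel]
    refine Submodule.neg_mem _ (Submodule.sum_mem _ fun k hk => ?_)
    by_cases hks : k ∈ s
    · exact Submodule.smul_mem _ _ (Submodule.subset_span
        ⟨k, hlt k hks (Finset.ne_of_mem_erase hk), rfl⟩)
    · simp [hf k hks]
  rw [Ideal.span, ← Finset.coe_image] at hfm
  obtain ⟨b, hb⟩ : ∃ b : {a // a ∈ A m} → MvPolynomial (Fin n) K, ∑ a, b a * X a.1 = f m := by
    have : ((A m).image (X : Fin n → MvPolynomial (Fin n) K) : Set (MvPolynomial (Fin n) K)) =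
        Set.range fun a : {a // a ∈ A m} => X a.1 := by ext; simp
    rw [this, Submodule.mem_span_range_iff_exists_fun] at hfm
    simpa using hfm
  set q : {a // a ∈ A m} → SyzIdx A := fun a => SyzIdx.mk m a.1 a.2 with hq
  have hq1 : ∀ a, (q a).fst = m := fun a => rfl
  have hq2 : ∀ a, (q a).snd = a.1 := fun a => rfl
  set f' : ι → MvPolynomial (Fin n) K := f - ∑ a, b a • syz c (q a) with hf'
  have hlow : IsLowerSet ((s.erase m : Finset ι) : Set ι) := by
    intro x y hyx hx
    simp only [Finset.coe_erase, Set.mem_sdiff, Finset.mem_coe, Set.mem_singleton_iff] at hx ⊢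
    exact ⟨hs hyx hx.1, (lt_of_le_of_lt hyx (hlt x hx.1 hx.2)).ne⟩
  obtain ⟨g, hg, hg0⟩ := ih (s.erase m) (Finset.erase_ssubset hms) hlow f' (by
    intro k hk
    simp only [hf', Pi.sub_apply, Finset.sum_apply, Pi.smul_apply, smul_eq_mul]
    by_cases hkm : k = m
    · have : ∀ a, syz c (q a) m = X a.1 := fun a => hc.syz_fst (q a)
      simp only [hkm, this, hb, sub_self]
    · have hks : k ∉ s := fun h => hk (Finset.mem_erase.2 ⟨hkm, h⟩)
      have hmk : m < k := by
        by_contra hcon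
        exact hks (hs (not_lt.1 hcon) hms)
      simp [hf k hks, fun a => hc.syz_of_lt (q a) (k := k) hmk]) (by
    simp only [hf', Pi.sub_apply, Finset.sum_apply, sub_smul, Finset.sum_sub_distrib, hrel,
      Finset.sum_smul, Pi.smul_apply, smul_assoc]
    rw [Finset.sum_comm]
    simp [← Finset.smul_sum, hc.syz_rel])
  refine ⟨g + ∑ a, Pi.single (q a) (b a), ?_, ?_⟩
  · have : f = f' + ∑ a, b a • syz c (q a) := by rw [hf']; abel
    rw [this, hg]
    simp only [Pi.add_apply, add_smul, Finset.sum_add_distrib, Finset.sum_apply, Finset.sum_smul]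
    congr 1
    rw [Finset.sum_comm]
    refine Finset.sum_congr rfl fun a _ => ?_
    rw [Finset.sum_eq_single (q a)] <;> simp +contextual
  · intro p hp
    have hpm : ∀ a, p ≠ q a := by
      rintro a rfl; exact hp hms
    simp [hg0 p (fun h => hp (Finset.mem_of_mem_erase h)), hpm]

/-- The linear syzygies of a family with linear quotients have linear quotients again: the colon
ideal at `(m, a)` is generated by the variables `X a'` with `a' ∈ A m`, `a' < a`. -/
lemma SyzCoeff.linQuot (hc : SyzCoeff z c) (h : LinQuot z A) :
    LinQuot (syz c) fun p => (A p.fst).filter (· < p.snd) where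
  colon_le p f hf := by
    set I := Ideal.span ((X : Fin n → MvPolynomial (Fin n) K) ''
      (((A p.fst).filter (· < p.snd) : Finset (Fin n)) : Set (Fin n))) with hI
    have key : Submodule.span (MvPolynomial (Fin n) K) (syz c '' Set.Iio p) ≤
        Submodule.comap (LinearMap.proj p.fst) I := by
      rw [Submodule.span_le]
      rintro _ ⟨p', hp', rfl⟩
      simp only [Submodule.comap_coe, Set.mem_preimage, LinearMap.coe_proj, Function.eval,
        SetLike.mem_coe]
      rcases (SyzIdx.lt_iff _ _).1 hp' with h1 | ⟨h1, h2⟩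
      · rw [hc.syz_of_lt p' h1]; exact I.zero_mem
      · rw [← h1, hc.syz_fst p']
        refine Ideal.subset_span ⟨p'.snd, ?_, rfl⟩
        have := p'.snd_mem
        rw [h1] at this
        simp [this, h2]
    have := key hf
    simp only [Submodule.mem_comap, LinearMap.coe_proj, Function.eval, Pi.smul_apply, smul_eq_mul,
      hc.syz_fst p] at this
    exact mem_span_X_of_mul_X (by simp) this
  X_smul p a ha := by
    classical
    rw [Finset.mem_filter] at ha
    set p' : SyzIdx A := SyzIdx.mk p.fst a ha.1
    have hp1 : p'.fst = p.fst := rfl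
    have hp2 : p'.snd = a := rfl
    -- the S-pair of the two syzygies with common leading position `p.fst`
    set w : ι → MvPolynomial (Fin n) K :=
      (X a : MvPolynomial (Fin n) K) • syz c p - (X p.snd : MvPolynomial (Fin n) K) • syz c p'
      with hw
    obtain ⟨g, hg, hg0⟩ := hc.exists_of_rel h (Finset.univ.filter (· < p.fst))
      (fun x y hyx hx => by
        simp only [Finset.coe_filter, Finset.mem_univ, true_and, Set.mem_ofPred_eq] at hx ⊢
        exact lt_of_le_of_lt hyx hx) w
      (by
        intro k hk
        have hk : p.fst ≤ k := by simpa using hk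
        rcases hk.eq_or_lt with rfl | hk
        · have e2 : syz c p' p.fst = X a := hc.syz_fst p'
          simp only [hw, Pi.sub_apply, Pi.smul_apply, smul_eq_mul, hc.syz_fst p, e2]
          ring
        · have e2 : syz c p' k = 0 := hc.syz_of_lt p' hk
          simp [hw, hc.syz_of_lt p hk, e2])
      (by
        simp only [hw, Pi.sub_apply, Pi.smul_apply, sub_smul, Finset.sum_sub_distrib, smul_assoc,
          ← Finset.smul_sum, hc.syz_rel, smul_zero, sub_zero])
    have hg' := sum_homogeneousComponent_smul (i := 1) hc.syz_hom (fun k => by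
      simp only [hw, Pi.sub_apply, Pi.smul_apply, smul_eq_mul]
      exact ((isHomogeneous_X K a).mul (hc.syz_hom p k)).sub
        ((isHomogeneous_X K p.snd).mul (hc.syz_hom p' k))) hg
    have hlt : p' < p := (SyzIdx.lt_iff _ _).2 (Or.inr ⟨hp1, ha.2⟩)
    refine ⟨fun r => homogeneousComponent 1 (g r) + (Pi.single p' (X p.snd) : SyzIdx A → _) r,
      fun r => ?_, fun r hr => ?_, ?_⟩
    · refine (homogeneousComponent_isHomogeneous 1 (g r)).add ?_
      by_cases hr : r = p'
      · subst hr; simpa using isHomogeneous_X K p.snd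
      · simpa [hr] using isHomogeneous_zero (Fin n) K 1
    · have h1 : ¬ r.fst < p.fst := fun hcon =>
        absurd ((SyzIdx.lt_iff r p).2 (Or.inl hcon)) (not_lt.2 hr)
      have h2 : r ≠ p' := fun e => absurd (e ▸ hlt) (not_lt.2 hr)
      simp [hg0 r (by simpa using h1), h2]
    · simp only [add_smul, Finset.sum_add_distrib, ← hg']
      rw [Finset.sum_eq_single p'] <;> simp +contextual [hw]

/-- All relations of a family with linear quotients have coefficients in the maximal ideal. -/
lemma LinQuot.constantCoeff_rel (h : LinQuot z A) {f : ι → MvPolynomial (Fin n) K}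
    (hf : ∑ k, f k • z k = 0) (k : ι) : constantCoeff (f k) = 0 := by
  obtain ⟨c, hc⟩ := h.exists_coeff
  obtain ⟨g, rfl, -⟩ := hc.exists_of_rel h Finset.univ (by simpa using isLowerSet_univ) f
    (by simp) hf
  simp only [Finset.sum_apply, Pi.smul_apply, smul_eq_mul, map_sum, map_mul]
  refine Finset.sum_eq_zero fun p _ => ?_
  have : constantCoeff (syz c p k) = 0 := by
    rw [constantCoeff_eq]
    exact (hc.syz_hom p k).coeff_eq_zero (by simp)
  simp [this]

end

end Syzygies

/-! ### Comparison with a minimal graded free resolution -/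

section Comparison

variable {K : Type} [Field K] {n : ℕ}

lemma map_eq_sum_single {r : ℕ} {M : Type} [AddCommGroup M] [Module (MvPolynomial (Fin n) K) M]
    (ψ : (Fin r → MvPolynomial (Fin n) K) →ₗ[MvPolynomial (Fin n) K] M)
    (v : Fin r → MvPolynomial (Fin n) K) : ψ v = ∑ l, v l • ψ (Pi.single l 1) := by
  conv_lhs => rw [LinearMap.pi_apply_eq_sum_univ ψ v]
  refine Finset.sum_congr rfl fun l _ => ?_
  congr 2
  funext j
  simp [Pi.single_apply, eq_comm]

/-- If two families express each other, with coefficient matrices `g` and `f`, and all relations of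
the first one have coefficients in the maximal ideal, then `g * f` is the identity modulo the
maximal ideal. -/
lemma constantCoeff_mul_eq_one {ι ι' M : Type} [Fintype ι] [Fintype ι'] [DecidableEq ι]
    [AddCommGroup M] [Module (MvPolynomial (Fin n) K) M] {z : ι → M} {y : ι' → M}
    (h : ∀ f : ι → MvPolynomial (Fin n) K, ∑ k, f k • z k = 0 → ∀ k, constantCoeff (f k) = 0)
    (g : Matrix ι ι' (MvPolynomial (Fin n) K)) (hg : ∀ k, z k = ∑ l, g k l • y l)
    (f : Matrix ι' ι (MvPolynomial (Fin n) K)) (hf : ∀ l, y l = ∑ k, f l k • z k) :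
    (g * f).map constantCoeff = 1 := by
  ext k j
  have := h (fun j => (1 : Matrix ι ι (MvPolynomial (Fin n) K)) k j - (g * f) k j) (by
    simp only [sub_smul, Finset.sum_sub_distrib, Matrix.mul_apply, Finset.sum_smul, mul_smul]
    rw [Finset.sum_comm]
    simp only [← Finset.smul_sum, ← hf, ← hg]
    simp [Matrix.one_apply]) j
  rw [map_sub, sub_eq_zero] at this
  rw [Matrix.map_apply, ← this]
  rw [Matrix.one_apply, Matrix.one_apply]
  split_ifs <;> simp

/-- The state of the comparison between a minimal graded free resolution and iterated linear
syzygies. The relations `R` of a graded free module with basis in degrees `dg` are the relations of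
a family `y`, which generates the same module as a family `z` with linear quotients. The entries of
each `z k` are homogeneous of degree `e`, those of `y l` of degree `D l`, and the internal degree of
`z` is `s`. -/
def IsLinearStage {r : ℕ} (s : ℕ) (dg : Fin r → ℕ)
    (R : Submodule (MvPolynomial (Fin n) K) (Fin r → MvPolynomial (Fin n) K)) : Prop :=
  ∃ (ι κ : Type) (_ : LinearOrder ι) (_ : Fintype ι) (z : ι → κ → MvPolynomial (Fin n) K)
    (A : ι → Finset (Fin n)) (y : Fin r → κ → MvPolynomial (Fin n) K) (e : ℕ) (D : Fin r → ℕ),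
    LinQuot z A ∧ (∀ k j, (z k j).IsHomogeneous e) ∧ (∀ l j, (y l j).IsHomogeneous (D l)) ∧
    (∀ l, D l + s = dg l + e) ∧
    (∀ l, ∃ f : ι → MvPolynomial (Fin n) K, y l = ∑ k, f k • z k) ∧
    (∀ k, ∃ g : Fin r → MvPolynomial (Fin n) K, z k = ∑ l, g l • y l) ∧
    ∀ v : Fin r → MvPolynomial (Fin n) K, ∑ l, v l • y l = 0 ↔ v ∈ R

/-- The induction step: at a linear stage all basis degrees equal `s`, because the two minimal
generating families differ by an invertible matrix of scalars; after the corresponding change of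
basis the relations are generated by the linear syzygies, which form the next linear stage. -/
lemma IsLinearStage.step {r r' s : ℕ} {dg : Fin r → ℕ} {dg' : Fin r' → ℕ}
    {R : Submodule (MvPolynomial (Fin n) K) (Fin r → MvPolynomial (Fin n) K)}
    {R' : Submodule (MvPolynomial (Fin n) K) (Fin r' → MvPolynomial (Fin n) K)}
    (h : IsLinearStage s dg R)
    (hR : ∀ v ∈ R, ∀ j, constantCoeff (v j) = 0) (hR' : ∀ v ∈ R', ∀ j, constantCoeff (v j) = 0)
    (φ : (Fin r' → MvPolynomial (Fin n) K) →ₗ[MvPolynomial (Fin n) K]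
      (Fin r → MvPolynomial (Fin n) K))
    (hφ : LinearMap.range φ = R) (hφ' : LinearMap.ker φ = R')
    (hdg : ∀ (k : Fin r') (j : Fin r), φ (Pi.single k 1) j = 0 ∨
      ∃ c : ℕ, dg' k = dg j + c ∧ (φ (Pi.single k 1) j).IsHomogeneous c) :
    (∀ l, dg l = s) ∧ IsLinearStage (s + 1) dg' R' := by
  classical
  obtain ⟨ι, κ, _, _, z, A, y, e, D, hz, hze, hy, hD, hyz, hzy, hker⟩ := h
  choose f hf using hyz
  choose g hg using hzy
  have hyrel : ∀ v : Fin r → MvPolynomial (Fin n) K, ∑ l, v l • y l = 0 →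
      ∀ j, constantCoeff (v j) = 0 := fun v hv => hR v ((hker v).1 hv)
  have hy0 : ∀ l, y l ≠ 0 := fun l hl => by
    have := hyrel (Pi.single l 1) (by
      rw [Finset.sum_eq_single l] <;> simp +contextual [hl]) l
    simp at this
  have heD : ∀ l, e ≤ D l := fun l => by
    by_contra hcon
    exact hy0 l (eq_zero_of_degree_lt hze (hy l) (not_le.1 hcon) (hf l))
  have hf' : ∀ l, y l = ∑ k, homogeneousComponent (D l - e) (f l k) • z k := fun l =>
    sum_homogeneousComponent_smul hze (by
      intro j; rw [Nat.sub_add_cancel (heD l)]; exact hy l j) (hf l)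
  -- `y l` needs a coefficient with nonzero constant term, which forces `D l - e = 0`
  have hDe : ∀ l, D l = e := fun l => by
    have h1 := constantCoeff_mul_eq_one hyrel
      (Matrix.of fun l k => homogeneousComponent (D l - e) (f l k)) hf' (Matrix.of g) hg
    have h2 := congrFun (congrFun h1 l) l
    rw [Matrix.map_apply, Matrix.mul_apply, Matrix.one_apply_eq, map_sum] at h2
    obtain ⟨k, -, hk⟩ := Finset.exists_ne_zero_of_sum_ne_zero (h2.trans_ne one_ne_zero)
    rw [map_mul] at hk
    have hk := left_ne_zero_of_mul hk
    rw [Matrix.of_apply, constantCoeff_eq] at hk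
    have := homogeneousComponent_isHomogeneous (D l - e) (f l k) hk
    simp at this
    have := heD l
    omega
  have hdgs : ∀ l, dg l = s := fun l => by have := hD l; have := hDe l; omega
  refine ⟨hdgs, ?_⟩
  -- the change of basis: `a` is the matrix expressing `y` in terms of `z`, and `b`, the reduction of
  -- `g` modulo the maximal ideal, is its inverse
  set a : Matrix (Fin r) ι K := Matrix.of fun l k => constantCoeff (f l k)
  set b : Matrix ι (Fin r) K := Matrix.of fun k l => constantCoeff (g k l)
  have hfa : ∀ l, y l = ∑ k, (a.map C : Matrix _ _ (MvPolynomial (Fin n) K)) l k • z k :=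
    fun l => by
      rw [hf' l]
      simp only [hDe l, Nat.sub_self, homogeneousComponent_zero]
      rfl
  have hmapC : ∀ {α β : Type} (m : Matrix α β K),
      ((m.map C : Matrix α β (MvPolynomial (Fin n) K)).map constantCoeff) = m := fun m => by
    ext; simp
  have hab : a * b = 1 := by
    have := constantCoeff_mul_eq_one hyrel (a.map C) hfa (Matrix.of g) hg
    rw [Matrix.map_mul, hmapC] at this
    exact this
  have hba : b * a = 1 := by
    have := constantCoeff_mul_eq_one (fun _ => hz.constantCoeff_rel) (Matrix.of g) hg
      (a.map C) hfa
    rw [Matrix.map_mul, hmapC] at this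
    exact this
  set P : Matrix (Fin r) ι (MvPolynomial (Fin n) K) := a.map C with hP
  set Q : Matrix ι (Fin r) (MvPolynomial (Fin n) K) := b.map C with hQ
  have hPQ : P * Q = 1 := by
    rw [hP, hQ, ← Matrix.map_mul, hab, Matrix.map_one _ C_0 C_1]
  have hQP : Q * P = 1 := by
    rw [hP, hQ, ← Matrix.map_mul, hba, Matrix.map_one _ C_0 C_1]
  have htrans : ∀ v : Fin r → MvPolynomial (Fin n) K,
      ∑ k, Matrix.vecMul v P k • z k = ∑ l, v l • y l := fun v => by
    simp only [Matrix.vecMul, dotProduct, Finset.sum_smul, mul_smul]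
    rw [Finset.sum_comm]
    simp only [← Finset.smul_sum, ← hfa]
  obtain ⟨c, hc⟩ := hz.exists_coeff
  have hφsum : ∀ v, φ v = ∑ l, v l • φ (Pi.single l 1) := map_eq_sum_single φ
  have hcomb : ∀ v, ∑ l, v l • Matrix.vecMul (φ (Pi.single l 1)) P = Matrix.vecMul (φ v) P :=
    fun v => by
      rw [hφsum v]
      simp only [← Matrix.vecMulLinear_apply, map_sum, map_smul]
  have hs : ∀ l, s ≤ dg' l := fun l => by
    have h0 : φ (Pi.single l 1) ≠ 0 := fun h0 => by
      have := hR' (Pi.single l 1) (hφ' ▸ h0) l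
      simp at this
    obtain ⟨j, hj⟩ := Function.ne_iff.1 h0
    rcases hdg l j with h | ⟨c, hc, -⟩
    · exact absurd h hj
    · rw [hc, hdgs]; omega
  refine ⟨SyzIdx A, ι, inferInstance, inferInstance, syz c, _,
    fun l => Matrix.vecMul (φ (Pi.single l 1)) P, 1, fun l => dg' l - s, hc.linQuot hz,
    hc.syz_hom, fun l k => ?_, fun l => ?_, fun l => ?_, fun p => ?_, fun v => ?_⟩
  · refine IsHomogeneous.sum _ _ _ fun j _ => ?_
    rcases hdg l j with h | ⟨c, hc, hhom⟩
    · rw [h, zero_mul]; exact isHomogeneous_zero _ _ _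
    · have : dg' l - s = c + 0 := by rw [hc, hdgs]; omega
      change IsHomogeneous _ (dg' l - s)
      rw [this]
      exact hhom.mul (isHomogeneous_C _ _)
  · have := hs l
    change dg' l - s + (s + 1) = dg' l + 1
    omega
  · obtain ⟨h, hh, -⟩ := hc.exists_of_rel hz Finset.univ (by simpa using isLowerSet_univ)
      (Matrix.vecMul (φ (Pi.single l 1)) P) (by simp)
      (by rw [htrans, hker, ← hφ]; exact LinearMap.mem_range_self _ _)
    exact ⟨h, hh⟩
  · have hmem : Matrix.vecMul (syz c p) Q ∈ LinearMap.range φ := by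
      rw [hφ, ← hker, ← htrans, Matrix.vecMul_vecMul, hQP, Matrix.vecMul_one]
      exact hc.syz_rel p
    obtain ⟨v, hv⟩ := hmem
    exact ⟨v, by rw [hcomb, hv, Matrix.vecMul_vecMul, hQP, Matrix.vecMul_one]⟩
  · rw [hcomb, ← hφ', LinearMap.mem_ker]
    refine ⟨fun h => ?_, fun h => by rw [h, Matrix.zero_vecMul]⟩
    rw [← Matrix.vecMul_one (φ v), ← hPQ, ← Matrix.vecMul_vecMul, h, Matrix.zero_vecMul]

/-- Let `J` be generated by homogeneous polynomials of degree `q` with linear quotients. Then every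
minimal graded free resolution of `J` is `q`-linear. -/
lemma degree_eq_of_linQuot {ι : Type} [LinearOrder ι] [Fintype ι] {z : ι → MvPolynomial (Fin n) K}
    {A : ι → Finset (Fin n)} {q : ℕ} (hz : LinQuot (fun k (_ : Unit) => z k) A)
    (hq : ∀ k, (z k).IsHomogeneous q) {J : Ideal (MvPolynomial (Fin n) K)}
    (hJ : J = Ideal.span (Set.range z)) {r : ℕ → ℕ} {dg : (i : ℕ) → Fin (r i) → ℕ}
    {φ : (i : ℕ) → ((Fin (r (i + 1)) → MvPolynomial (Fin n) K) →ₗ[MvPolynomial (Fin n) K]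
      (Fin (r i) → MvPolynomial (Fin n) K))}
    {ε : (Fin (r 0) → MvPolynomial (Fin n) K) →ₗ[MvPolynomial (Fin n) K] MvPolynomial (Fin n) K}
    (h : IsMinimalGradedFreeResolution K n J r dg φ ε) (i : ℕ) (l : Fin (r i)) :
    dg i l = i + q := by
  obtain ⟨hε, hker, hex, hεh, hgr, hmin⟩ := h
  have hR : ∀ i, ∀ v ∈ LinearMap.range (φ i), ∀ j, constantCoeff (v j) = 0 := by
    rintro i _ ⟨v, rfl⟩ j
    rw [map_eq_sum_single]
    simp only [Finset.sum_apply, Pi.smul_apply, smul_eq_mul, map_sum, map_mul, hmin, mul_zero,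
      Finset.sum_const_zero]
  have stage : ∀ i, IsLinearStage (i + q) (dg i) (LinearMap.range (φ i)) := by
    intro i
    induction i with
    | zero =>
      refine ⟨ι, Unit, inferInstance, inferInstance, fun k _ => z k, A,
        fun l _ => ε (Pi.single l 1), q, dg 0, hz, fun k _ => hq k, fun l _ => hεh l,
        fun l => by omega, fun l => ?_, fun k => ?_, fun v => ?_⟩
      · have : ε (Pi.single l 1) ∈ Submodule.span (MvPolynomial (Fin n) K) (Set.range z) := by
          have h2 := LinearMap.mem_range_self ε (Pi.single l 1)
          rw [hε, hJ] at h2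
          exact h2
        obtain ⟨f, hf⟩ := (Submodule.mem_span_range_iff_exists_fun _).1 this
        exact ⟨f, by funext; simp [← hf]⟩
      · have : z k ∈ LinearMap.range ε := by
          rw [hε, hJ]
          exact Ideal.subset_span ⟨k, rfl⟩
        obtain ⟨g, hg⟩ := this
        exact ⟨g, by funext; simp [← hg, map_eq_sum_single ε g]⟩
      · rw [← hker, LinearMap.mem_ker, map_eq_sum_single ε v]
        constructor
        · intro h; simpa using congrFun h ()
        · intro h; funext; simpa using h
    | succ i ih =>
      have := (ih.step (hR i) (hR (i + 1)) (φ i) rfl (hex i) (hgr i)).2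
      rwa [show i + q + 1 = i + 1 + q by omega] at this
  exact ((stage i).step (hR i) (hR (i + 1)) (φ i) rfl (hex i) (hgr i)).1 l

end Comparison

/-! ### Sorted arrays of edges -/

section SpreadArrays

variable {K : Type} [Field K] {n d k : ℕ} {V : Fin d → Finset (Fin n)} {t : ℕ → ℕ}

/-- A sorted array of `k` edges: the edges are the `α · s`, and each row `α j`, which lists their
vertices in `V j`, is weakly increasing. -/
def IsSpreadArray (n d k : ℕ) (V : Fin d → Finset (Fin n)) (t : ℕ → ℕ)
    (α : Fin d → Fin k → Fin n) : Prop :=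
  (∀ j, Monotone (α j)) ∧ ∀ s, IsSpreadEdge n d V t (fun j => α j s)

/-- The exponent vector of the product of all variables in an array. -/
def expo (α : Fin d → Fin k → Fin n) : Fin n →₀ ℕ := ∑ j, ∑ s, Finsupp.single (α j s) 1

lemma expo_apply (α : Fin d → Fin k → Fin n) (v : Fin n) :
    expo α v = ∑ j, ∑ s, if α j s = v then 1 else 0 := by
  simp [expo, Finsupp.finsetSum_apply, Finsupp.single_apply]

lemma degree_expo (α : Fin d → Fin k → Fin n) : (expo α).degree = k * d := by
  simp [expo, map_sum, mul_comm]

lemma monomial_expo (α : Fin d → Fin k → Fin n) :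
    (monomial (expo α) 1 : MvPolynomial (Fin n) K) = ∏ s, ∏ j, X (α j s) := by
  rw [Finset.prod_comm, expo, monomial_sum_one]
  refine Finset.prod_congr rfl fun j _ => ?_
  rw [monomial_sum_one]
  rfl

/-- Sorting two sequences preserves the inequalities `f s + c ≤ g s`. -/
lemma sort_add_le (f g : Fin k → Fin n) (c : ℕ) (h : ∀ s, (f s : ℕ) + c ≤ g s) (s : Fin k) :
    (f (Tuple.sort f s) : ℕ) + c ≤ g (Tuple.sort g s) := by
  -- by pigeonhole, one of the `s + 1` smallest entries of `g` sits at the position of an entry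
  -- of `f` that is not among the `s` smallest ones
  obtain ⟨i, his, hi⟩ : ∃ i ≤ s, s ≤ (Tuple.sort f).symm (Tuple.sort g i) := by
    by_contra! hcon
    have := Finset.card_le_card_of_injOn (s := Finset.Iic s) (t := Finset.Iio s)
      (fun i => (Tuple.sort f).symm (Tuple.sort g i))
      (fun i hi => by simpa using hcon i (by simpa using hi))
      (fun x _ y _ hxy => by simpa using hxy)
    simp at this
  have h1 : f (Tuple.sort f s) ≤ f (Tuple.sort g i) := by
    simpa using Tuple.monotone_sort f hi
  have h2 : g (Tuple.sort g i) ≤ g (Tuple.sort g s) := Tuple.monotone_sort g his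
  have h3 := h (Tuple.sort g i)
  have h1' : (f (Tuple.sort f s) : ℕ) ≤ f (Tuple.sort g i) := h1
  have h2' : (g (Tuple.sort g i) : ℕ) ≤ g (Tuple.sort g s) := h2
  omega

lemma exists_isSpreadArray (α : Fin d → Fin k → Fin n)
    (h : ∀ s, IsSpreadEdge n d V t (fun j => α j s)) :
    ∃ β, IsSpreadArray n d k V t β ∧ expo β = expo α := by
  refine ⟨fun j s => α j (Tuple.sort (α j) s), ⟨fun j => Tuple.monotone_sort (α j), fun s =>
    ⟨fun j => (h _).1 j, fun j hj => ?_⟩⟩, ?_⟩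
  · exact sort_add_le _ _ _ (fun s => (h s).2 j hj) s
  · refine Finset.sum_congr rfl fun j _ => ?_
    exact Equiv.sum_comp (Tuple.sort (α j)) fun s => Finsupp.single (α j s) 1

open scoped Pointwise in
/-- The powers of the edge ideal are generated by the monomials of sorted arrays. -/
lemma edgeIdeal_pow (K : Type) [Field K] (n d k : ℕ) (V : Fin d → Finset (Fin n)) (t : ℕ → ℕ) :
    edgeIdeal K n d V t ^ k = Ideal.span ((fun m => monomial m (1 : K)) ''
      (expo '' {α : Fin d → Fin k → Fin n | IsSpreadArray n d k V t α})) := by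
  have h0 : edgeIdeal K n d V t ^ k = Ideal.span (spreadGens K n d V t ^ k) :=
    Submodule.span_pow _ k
  rw [h0]
  congr 1
  ext m
  rw [Set.mem_pow_iff_prod]
  constructor
  · rintro ⟨f, hf, rfl⟩
    choose e he hfe using hf
    obtain ⟨β, hβ, hβe⟩ := exists_isSpreadArray (fun j s => e s j) he
    refine ⟨_, ⟨β, hβ, rfl⟩, ?_⟩
    simp only [hβe, monomial_expo, hfe]
  · rintro ⟨_, ⟨α, hα, rfl⟩, rfl⟩
    exact ⟨fun s => ∏ j, X (α j s), fun s => ⟨_, hα.2 s, rfl⟩, (monomial_expo α).symm⟩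

lemma eq_of_mem_of_mem (hV : ∀ i j : Fin d, i < j → ∀ p ∈ V i, ∀ q ∈ V j, (p : ℕ) < (q : ℕ))
    {i j : Fin d} {v : Fin n} (hi : v ∈ V i) (hj : v ∈ V j) : i = j := by
  rcases lt_trichotomy i j with h | h | h
  · exact absurd (hV i j h v hi v hj) (lt_irrefl _)
  · exact h
  · exact absurd (hV j i h v hj v hi) (lt_irrefl _)

lemma add_sum_eq_of_eq_off {ι M : Type} [Fintype ι] [DecidableEq ι] [AddCommMonoid M] {f g : ι → M}
    {x y : M} (j : ι) (hfg : ∀ i ≠ j, f i = g i) (h : x + f j = y + g j) :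
    x + ∑ i, f i = y + ∑ i, g i := by
  rw [← Finset.add_sum_erase _ f (Finset.mem_univ j), ← Finset.add_sum_erase _ g (Finset.mem_univ j),
    ← add_assoc, ← add_assoc, h, Finset.sum_congr rfl fun i hi => hfg i (Finset.ne_of_mem_erase hi)]

/-- The exchange property. If `β` precedes `α` lexicographically, with first difference in row `j`
at position `s`, then putting the entry `β j s` into `α` at this place gives a sorted array again:
the bounds from the left and from the previous row are those of `β`, and the others only relax. -/
lemma IsSpreadArray.update {α β : Fin d → Fin k → Fin n} (hα : IsSpreadArray n d k V t α)
    (hβ : IsSpreadArray n d k V t β) {j : Fin d} {s : Fin k} (hj : ∀ i < j, β i = α i)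
    (hs : ∀ s' < s, β j s' = α j s') (hlt : β j s < α j s) :
    IsSpreadArray n d k V t (Function.update α j (Function.update (α j) s (β j s))) := by
  constructor
  · intro i
    by_cases hij : i = j
    · subst hij
      rw [Function.update_self]
      intro x y hxy
      by_cases hx : x = s
      · subst hx
        by_cases hy : y = x
        · rw [hy]
        · rw [Function.update_self, Function.update_of_ne hy]
          exact hlt.le.trans (hα.1 i hxy)
      · rw [Function.update_of_ne hx]
        by_cases hy : y = s
        · subst hy
          rw [Function.update_self, ← hs x (lt_of_le_of_ne hxy hx)]
          exact hβ.1 i hxy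
        · rw [Function.update_of_ne hy]
          exact hα.1 i hxy
    · rw [Function.update_of_ne hij]
      exact hα.1 i
  · intro s'
    have hval : ∀ i, Function.update α j (Function.update (α j) s (β j s)) i s' =
        if i = j ∧ s' = s then β j s else α i s' := by
      intro i
      by_cases hij : i = j
      · subst hij
        rw [Function.update_self]
        by_cases hss : s' = s
        · subst hss; simp
        · simp [hss]
      · simp [hij]
    simp only [hval]
    by_cases hss : s' = s
    · subst hss
      refine ⟨fun i => ?_, fun i hi => ?_⟩
      · by_cases hij : i = j
        · subst hij; simpa using (hβ.2 s').1 i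
        · simpa [hij] using (hα.2 s').1 i
      · have h1 := (hα.2 s').2 i hi
        have h2 := (hβ.2 s').2 i hi
        dsimp only at h1 h2
        simp only [and_true]
        split_ifs with h3 h4 h4
        · rw [Fin.ext_iff] at h3 h4; simp only at h3 h4; omega
        · have h5 : (β j s' : ℕ) < α j s' := hlt
          subst h3
          omega
        · have h5 : (⟨i, Nat.lt_of_succ_lt hi⟩ : Fin d) < j := by
            rw [← h4]; exact Nat.lt_succ_self i
          rw [← hj _ h5, ← h4]
          exact h2
        · exact h1
    · simpa [hss] using hα.2 s'

lemma expo_update (α : Fin d → Fin k → Fin n) (j : Fin d) (s : Fin k) (p : Fin n) :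
    Finsupp.single p 1 + expo α = Finsupp.single (α j s) 1 +
      expo (Function.update α j (Function.update (α j) s p)) := by
  refine add_sum_eq_of_eq_off j (fun i hi => by simp [hi]) ?_
  refine add_sum_eq_of_eq_off s (fun i hi => by simp [hi]) ?_
  simp [add_comm]

/-- The variable brought in by the exchange has a larger exponent in `β` than in `α`. -/
lemma expo_lt_expo (hV : ∀ i j : Fin d, i < j → ∀ p ∈ V i, ∀ q ∈ V j, (p : ℕ) < (q : ℕ))
    {α β : Fin d → Fin k → Fin n} (hα : IsSpreadArray n d k V t α)
    (hβ : IsSpreadArray n d k V t β) {j : Fin d} {s : Fin k}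
    (hs : ∀ s' < s, β j s' = α j s') (hlt : β j s < α j s) :
    expo α (β j s) < expo β (β j s) := by
  rw [expo_apply, expo_apply]
  have hmem : β j s ∈ V j := (hβ.2 s).1 j
  refine Finset.sum_lt_sum (fun i _ => ?_) ⟨j, Finset.mem_univ j, ?_⟩
  · by_cases hij : i = j
    · subst hij
      refine Finset.sum_le_sum fun s' _ => ?_
      split_ifs with h1 h2
      · exact le_rfl
      · refine absurd ?_ h2
        rw [hs s' ?_, h1]
        by_contra hcon
        have := hα.1 i (not_lt.1 hcon)
        rw [h1] at this
        exact absurd hlt (not_lt.2 this)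
      · exact Nat.zero_le _
      · exact le_rfl
    · rw [Finset.sum_eq_zero]
      · exact Nat.zero_le _
      · intro s' _
        rw [if_neg]
        intro h
        exact hij (eq_of_mem_of_mem hV (v := α i s') ((hα.2 s').1 i) (by rw [h]; exact hmem))
  · refine Finset.sum_lt_sum (fun s' _ => ?_) ⟨s, Finset.mem_univ s, ?_⟩
    · split_ifs with h1 h2
      · exact le_rfl
      · refine absurd ?_ h2
        rw [hs s' ?_, h1]
        by_contra hcon
        have := hα.1 j (not_lt.1 hcon)
        rw [h1] at this
        exact absurd hlt (not_lt.2 this)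
      · exact Nat.zero_le _
      · exact le_rfl
    · simp [hlt.ne']

/-- Sorted arrays, ordered lexicographically: by the first row in which they differ and there by the
first position. -/
abbrev SpreadIdx (n d k : ℕ) (V : Fin d → Finset (Fin n)) (t : ℕ → ℕ) : Type :=
  {α : Lex (Fin d → Lex (Fin k → Fin n)) //
    IsSpreadArray n d k V t fun j s => ofLex (ofLex α j) s}

/-- The array underlying an index. -/
def SpreadIdx.arr (a : SpreadIdx n d k V t) : Fin d → Fin k → Fin n :=
  fun j s => ofLex (ofLex a.1 j) s

/-- An array as an index. -/
def SpreadIdx.mk (α : Fin d → Fin k → Fin n) (h : IsSpreadArray n d k V t α) :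
    SpreadIdx n d k V t :=
  ⟨toLex fun j => toLex (α j), h⟩

lemma SpreadIdx.lt_iff (a b : SpreadIdx n d k V t) :
    a < b ↔ ∃ j s, (∀ i < j, a.arr i = b.arr i) ∧ (∀ s' < s, a.arr j s' = b.arr j s') ∧
      a.arr j s < b.arr j s := by
  constructor
  · rintro ⟨j, hj, s, hs, hlt⟩
    exact ⟨j, s, hj, hs, hlt⟩
  · rintro ⟨j, s, hj, hs, hlt⟩
    exact ⟨j, hj, s, hs, hlt⟩

instance : Fintype (SpreadIdx n d k V t) :=
  haveI : Finite (Lex (Fin d → Lex (Fin k → Fin n))) :=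
    inferInstanceAs (Finite (Fin d → Fin k → Fin n))
  Fintype.ofFinite _

open Classical in
/-- The variables `X p` that carry the monomial of the array `a` into the ideal of the monomials of
the earlier arrays by a single exchange. -/
def exchangeVars (a : SpreadIdx n d k V t) : Finset (Fin n) :=
  Finset.univ.filter fun p => ∃ b < a, ∃ c,
    Finsupp.single p 1 + expo a.arr = Finsupp.single c 1 + expo b.arr

/-- The monomials of sorted arrays have linear quotients in lexicographic order, by the exchange
property. -/
lemma linQuot_spread (K : Type) [Field K]
    (hV : ∀ i j : Fin d, i < j → ∀ p ∈ V i, ∀ q ∈ V j, (p : ℕ) < (q : ℕ)) :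
    LinQuot (fun (a : SpreadIdx n d k V t) (_ : Unit) =>
      (monomial (expo a.arr) 1 : MvPolynomial (Fin n) K)) exchangeVars where
  colon_le a f hf := by
    have key : f * monomial (expo a.arr) 1 ∈ Ideal.span ((fun m => monomial m (1 : K)) ''
        ((fun b : SpreadIdx n d k V t => expo b.arr) '' Set.Iio a)) := by
      have := Submodule.mem_map_of_mem (f := LinearMap.proj ()) hf
      rw [Submodule.map_span, Set.image_image] at this
      rw [Set.image_image]
      exact this
    rw [mem_ideal_span_monomial_image] at key
    rw [mem_ideal_span_X_image]
    intro w hw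
    obtain ⟨_, ⟨b, hb, rfl⟩, hle⟩ := key (w + expo a.arr) (by
      rw [mem_support_iff, coeff_mul_monomial, mul_one]
      exact mem_support_iff.1 hw)
    obtain ⟨j, s, hj, hs, hlt⟩ := (SpreadIdx.lt_iff b a).1 hb
    refine ⟨b.arr j s, ?_, ?_⟩
    · simp only [exchangeVars, Finset.coe_filter, Finset.mem_univ, true_and, Set.mem_ofPred_eq]
      have harr : IsSpreadArray n d k V t
          (Function.update a.arr j (Function.update (a.arr j) s (b.arr j s))) :=
        IsSpreadArray.update a.2 b.2 hj hs hlt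
      refine ⟨SpreadIdx.mk _ harr, ?_, _, expo_update a.arr j s (b.arr j s)⟩
      rw [SpreadIdx.lt_iff]
      refine ⟨j, s, fun i hi => ?_, fun s' hs' => ?_, ?_⟩
      · change Function.update a.arr j (Function.update (a.arr j) s (b.arr j s)) i = _
        exact Function.update_of_ne hi.ne _ _
      · change Function.update a.arr j (Function.update (a.arr j) s (b.arr j s)) j s' = _
        rw [Function.update_self, Function.update_of_ne hs'.ne]
      · change Function.update a.arr j (Function.update (a.arr j) s (b.arr j s)) j s < _
        rw [Function.update_self, Function.update_self]
        exact hlt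
    · have h1 : expo b.arr (b.arr j s) ≤ (w + expo a.arr) (b.arr j s) := hle _
      have h2 : expo a.arr (b.arr j s) < expo b.arr (b.arr j s) :=
        expo_lt_expo hV (α := a.arr) (β := b.arr) a.2 b.2 hs hlt
      rw [Finsupp.add_apply] at h1
      intro h3
      omega
  X_smul a p hp := by
    classical
    simp only [exchangeVars, Finset.mem_filter, Finset.mem_univ, true_and] at hp
    obtain ⟨b, hb, c, hbc⟩ := hp
    refine ⟨Pi.single b (X c), fun r => ?_, fun r hr => ?_, ?_⟩
    · by_cases h : r = b
      · subst h; simpa using isHomogeneous_X K c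
      · simpa [h] using isHomogeneous_zero (Fin n) K 1
    · have : r ≠ b := fun h => absurd (h ▸ hb) (not_lt.2 hr)
      simp [this]
    · rw [Finset.sum_eq_single b (by simp +contextual) (by simp)]
      funext
      simp only [Pi.single_eq_same, Pi.smul_apply, smul_eq_mul, X, monomial_mul, mul_one, hbc]

/-- Strong persistence. If `u` is the componentwise smallest edge and `w * u` is divisible by the
product of `k + 1` sorted edges, then omitting the first of these leaves a divisor of `w`. -/
lemma colon_le_pow (hne : ∀ j, (V j).Nonempty)
    (hV : ∀ i j : Fin d, i < j → ∀ p ∈ V i, ∀ q ∈ V j, (p : ℕ) < (q : ℕ))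
    (hiso : ∀ (j : Fin d), ∀ v ∈ V j, ∃ e, IsSpreadEdge n d V t e ∧ e j = v) :
    Submodule.colon (edgeIdeal K n d V t ^ (k + 1)) (edgeIdeal K n d V t) ≤
      edgeIdeal K n d V t ^ k := by
  intro f hf
  rw [Submodule.mem_colon] at hf
  set e : Fin d → Fin n := fun j => (V j).min' (hne j) with he
  have hedge : IsSpreadEdge n d V t e := by
    refine ⟨fun j => (V j).min'_mem _, fun j hj => ?_⟩
    obtain ⟨e', he', hej⟩ := hiso ⟨j + 1, hj⟩ (e ⟨j + 1, hj⟩) ((V _).min'_mem _)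
    have h1 := he'.2 j hj
    have h2 : e ⟨j, Nat.lt_of_succ_lt hj⟩ ≤ e' ⟨j, Nat.lt_of_succ_lt hj⟩ :=
      (V _).min'_le _ (he'.1 _)
    have h2' : (e ⟨j, Nat.lt_of_succ_lt hj⟩ : ℕ) ≤ e' ⟨j, Nat.lt_of_succ_lt hj⟩ := h2
    rw [hej] at h1
    omega
  have hu : (monomial (∑ j, Finsupp.single (e j) 1) 1 : MvPolynomial (Fin n) K) = ∏ j, X (e j) :=
    monomial_sum_one _ _
  have hmem := hf (∏ j, X (e j)) (Ideal.subset_span ⟨e, hedge, rfl⟩)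
  rw [← hu, smul_eq_mul, edgeIdeal_pow, mem_ideal_span_monomial_image] at hmem
  rw [edgeIdeal_pow, mem_ideal_span_monomial_image]
  intro w hw
  obtain ⟨_, ⟨α, hα, rfl⟩, hle⟩ := hmem (w + ∑ j, Finsupp.single (e j) 1) (by
    rw [mem_support_iff, coeff_mul_monomial, mul_one]
    exact mem_support_iff.1 hw)
  refine ⟨_, ⟨fun j s => α j s.succ, ⟨fun j x y hxy => hα.1 j (Fin.succ_le_succ_iff.2 hxy),
    fun s => hα.2 s.succ⟩, rfl⟩, fun v => ?_⟩
  by_cases H : ∃ j, ∃ s : Fin k, α j s.succ = v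
  · obtain ⟨j, s, hjs⟩ := H
    have hvj : v ∈ V j := hjs ▸ (hα.2 s.succ).1 j
    have hfirst : ∑ i, (if e i = v then 1 else 0) ≤ ∑ i, if α i 0 = v then 1 else 0 := by
      refine Finset.sum_le_sum fun i _ => ?_
      split_ifs with h1 h2
      · exact le_rfl
      · refine absurd ?_ h2
        have hij : i = j := eq_of_mem_of_mem hV (h1 ▸ hedge.1 i) hvj
        subst hij
        refine le_antisymm (hjs ▸ hα.1 i (Fin.zero_le _)) ?_
        rw [← h1]
        exact (V i).min'_le _ ((hα.2 0).1 i)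
      · exact Nat.zero_le _
      · exact le_rfl
    have h1 := hle v
    rw [Finsupp.add_apply, Finsupp.finsetSum_apply, expo_apply] at h1
    simp only [Fin.sum_univ_succ, Finset.sum_add_distrib, Finsupp.single_apply] at h1
    rw [expo_apply]
    omega
  · push Not at H
    rw [expo_apply]
    simp [H]

end SpreadArrays

/-! ### Strong persistence and linear resolutions -/

/-- **Corollary.**  The edge ideal `I = I(K_V^𝐭)` satisfies the strong persistence
property, `(I^{k+1} : I) = I^k` for all `k ≥ 1`, and every power `I^k` (`k ≥ 1`), which is
generated in degree `k·d`, has a linear resolution: in any minimal graded free resolution of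
`I^k`, all basis elements in homological degree `i` have internal degree `i + k·d`
(equivalently `β_{i,j}(I^k) = 0` for `j ≠ i + k·d`). -/
theorem edgeIdeal_strong_persistence_and_powers_linear
    (K : Type) [Field K] (n d : ℕ) (hd : 0 < d)
    (V : Fin d → Finset (Fin n)) (t : ℕ → ℕ)
    (ht : ∀ i, 1 ≤ t i)
    (hV : ∀ i j : Fin d, i < j → ∀ p ∈ V i, ∀ q ∈ V j, (p : ℕ) < (q : ℕ))
    (hne : ∀ j, (V j).Nonempty)
    (hiso : ∀ (j : Fin d), ∀ v ∈ V j, ∃ e, IsSpreadEdge n d V t e ∧ e j = v) :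
    (∀ k : ℕ, 1 ≤ k →
      Submodule.colon (edgeIdeal K n d V t ^ (k + 1)) (edgeIdeal K n d V t) =
        edgeIdeal K n d V t ^ k) ∧
    (∀ k : ℕ, 1 ≤ k →
      ∀ (r : ℕ → ℕ) (dg : (i : ℕ) → Fin (r i) → ℕ)
        (φ : (i : ℕ) → ((Fin (r (i + 1)) → MvPolynomial (Fin n) K) →ₗ[MvPolynomial (Fin n) K]
          (Fin (r i) → MvPolynomial (Fin n) K)))
        (ε : (Fin (r 0) → MvPolynomial (Fin n) K) →ₗ[MvPolynomial (Fin n) K]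
          MvPolynomial (Fin n) K),
        IsMinimalGradedFreeResolution K n (edgeIdeal K n d V t ^ k) r dg φ ε →
          ∀ (i : ℕ) (l : Fin (r i)), dg i l = i + k * d) := by
  refine ⟨fun k _ => le_antisymm (colon_le_pow hne hV hiso) fun f hf => ?_, ?_⟩
  · rw [Submodule.mem_colon]
    intro p hp
    rw [pow_succ]
    exact Ideal.mul_mem_mul hf hp
  · intro k _ r dg φ ε h i l
    refine degree_eq_of_linQuot (linQuot_spread (k := k) (t := t) K hV)
      (fun a => isHomogeneous_monomial 1 (degree_expo a.arr)) ?_ h i l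
    rw [edgeIdeal_pow]
    congr 1
    ext m
    constructor
    · rintro ⟨_, ⟨α, hα, rfl⟩, rfl⟩
      exact ⟨SpreadIdx.mk α hα, rfl⟩
    · rintro ⟨a, rfl⟩
      exact ⟨_, ⟨a.arr, a.2, rfl⟩, rfl⟩

end
end

section
/- Let K_V^t be a complete t-spread d-partite hypergraph with |V(K_V^t)| = r. Then the analytic spread of its edge ideal satisfies ℓ(I(K_V^t)) = r − d + 1. -/
/-!
Write `S = K[x_1, …, x_n]`, `I` for the edge ideal and `x_e` for the monomial of an edge `e`.

All `x_e` have degree `d`, so the fiber cone `R(I)/𝔪R(I)` is isomorphic to the toric algebra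
`A = K[x_e T : e an edge] ⊆ S[T]` (`nonempty_degreeOneAlgebra_equiv`). Hence the analytic spread is
the Krull dimension of the affine domain `A`, that is, its transcendence degree over `K`
(`ringKrullDim_eq_trdeg`, by Noether normalization).

Let `M j` be the largest vertex of `V j`. Each edge meets each class once, so `A` is unchanged up to
isomorphism when every `x_{M j}` is set to `1` (`dehomogenize_injective`). This embeds `A` in a
polynomial ring on `T` and the `r - d` remaining vertices. The vertices `M j` form an edge, so `T`
lies in the image. As no vertex is isolated, each `v ∈ V j` with `v ≠ M j` lies on an edge `e`;
continuing `e` after position `j` by `M` yields an edge `e'`, and exchanging `v` for `M j` in `e'`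
yields another edge. The quotient of the images of their generators is `x_v`. So the polynomial ring
is algebraic over the image of `A`, and the transcendence degree is `r - d + 1`
(`ringKrullDim_eq_card`).
-/

open MvPolynomial

noncomputable section

/-- The analytic spread `ℓ(I)`: the Krull dimension of the fiber cone
`R(I)/𝔪R(I)`, where `R(I)` is the Rees algebra of `I` and `𝔪 = (x_1, …, x_n)` is the graded
maximal ideal of the polynomial ring. -/
def analyticSpread (K : Type) [Field K] (n : ℕ) (I : Ideal (MvPolynomial (Fin n) K)) :
    WithBot ℕ∞ :=
  ringKrullDim ((reesAlgebra I) ⧸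
    (Ideal.map (algebraMap (MvPolynomial (Fin n) K) (reesAlgebra I))
      (Ideal.span (Set.range (X : Fin n → MvPolynomial (Fin n) K)))))

/-! ### Krull dimension and transcendence degree -/

/-- Integral extensions preserve Krull dimension: strict inclusions of primes stay strict under
contraction, and lying over with going up lifts chains. -/
theorem ringKrullDim_eq_of_integral_inj {R S : Type} [CommRing R] [CommRing S] (g : R →+* S)
    (hg : Function.Injective g) (hi : g.IsIntegral) : ringKrullDim S = ringKrullDim R := by
  algebraize [g]
  apply le_antisymm
  · refine Order.krullDim_le_of_strictMono (PrimeSpectrum.comap (algebraMap R S)) ?_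
    intro P Q h
    exact Ideal.IsIntegral.comap_lt_comap (R := R) h
  · refine iSup_le fun l => ?_
    have : FaithfulSMul R S := (faithfulSMul_iff_algebraMap_injective R S).mpr hg
    obtain ⟨P, hP⟩ := (inferInstance : Nonempty (Ideal.primesOver l.head.asIdeal S))
    have := hP.1
    have := hP.2
    obtain ⟨L, hL, -⟩ := Ideal.exists_ltSeries_of_hasGoingUp l P
    rw [← hL]
    exact Order.LTSeries.length_le_krullDim L

/-- By Noether normalization, the dimension of an affine domain is its transcendence degree. -/
theorem ringKrullDim_eq_trdeg (K A : Type) [Field K] [CommRing A] [IsDomain A] [Algebra K A]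
    [Algebra.FiniteType K A] (k : ℕ) (h : Algebra.trdeg K A = k) : ringKrullDim A = k := by
  obtain ⟨s, g, hg, hi⟩ := exists_integral_inj_algHom_of_fg K A
  rw [ringKrullDim_eq_of_integral_inj g.toRingHom hg hi, MvPolynomial.ringKrullDim_of_isNoetherianRing,
    ringKrullDim_eq_zero_of_field]
  algebraize [g.toRingHom]
  have : FaithfulSMul (MvPolynomial (Fin s) K) A := (faithfulSMul_iff_algebraMap_injective _ _).mpr hg
  have h1 := trdeg_add_eq K (MvPolynomial (Fin s) K) (A := A)
  have h2 : Algebra.trdeg (MvPolynomial (Fin s) K) A = 0 := trdeg_eq_zero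
  rw [h2, h, MvPolynomial.trdeg_of_isDomain] at h1
  simp at h1
  simp [h1]

/-- An affine domain embedded in a polynomial ring has full dimension as soon as each variable is a
quotient of two of its elements. -/
theorem ringKrullDim_eq_card (K A σ : Type) [Field K] [CommRing A] [IsDomain A] [Algebra K A]
    [Algebra.FiniteType K A] [Fintype σ] (f : A →ₐ[K] MvPolynomial σ K) (hf : Function.Injective f)
    (hX : ∀ i, ∃ a b : A, a ≠ 0 ∧ f a * X i = f b) :
    ringKrullDim A = (Fintype.card σ : ℕ) := by
  apply ringKrullDim_eq_trdeg K
  algebraize [f.toRingHom]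
  have : FaithfulSMul A (MvPolynomial σ K) := (faithfulSMul_iff_algebraMap_injective _ _).mpr hf
  have h1 := trdeg_add_eq K A (A := MvPolynomial σ K)
  have : Algebra.IsAlgebraic A (MvPolynomial σ K) := by
    refine ⟨fun p => ?_⟩
    induction p using MvPolynomial.induction_on with
    | C a =>
      have : (C a : MvPolynomial σ K) = algebraMap A _ (algebraMap K A a) :=
        (f.commutes a).symm
      rw [this]
      exact isAlgebraic_algebraMap _
    | add p q hp hq => exact hp.add hq
    | mul_X p i hp =>
      refine hp.mul ?_
      obtain ⟨a, b, ha, hab⟩ := hX i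
      have hab : algebraMap A (MvPolynomial σ K) a * X i = algebraMap A _ b := hab
      -- `X i` is a root of the linear polynomial `a Y - b`.
      refine ⟨Polynomial.C a * Polynomial.X - Polynomial.C b, ?_, ?_⟩
      · intro h
        apply ha
        simpa using congrArg (fun p => p.coeff 1) h
      · simp [hab]
  have h2 : Algebra.trdeg A (MvPolynomial σ K) = 0 := trdeg_eq_zero
  rw [h2, MvPolynomial.trdeg_of_isDomain] at h1
  simpa using h1

/-! ### The fiber cone of an equigenerated ideal -/

/-- The `K`-subalgebra of `S[T]` generated by the elements `g T`, `g ∈ G`. -/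
noncomputable def degreeOneAlgebra (K : Type) [Field K] {n : ℕ} (G : Set (MvPolynomial (Fin n) K)) :
    Subalgebra K (Polynomial (MvPolynomial (Fin n) K)) :=
  Algebra.adjoin K (Polynomial.monomial 1 '' G)

section
variable {K : Type} [Field K] {n : ℕ}

theorem degreeOneAlgebra_le_rees (G : Set (MvPolynomial (Fin n) K)) :
    degreeOneAlgebra K G ≤ (reesAlgebra (Ideal.span G)).restrictScalars K := by
  refine Algebra.adjoin_le ?_
  rintro _ ⟨g, hg, rfl⟩
  exact reesAlgebra.monomial_mem.mpr (by simpa using Ideal.subset_span hg)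

theorem isHomogeneous_coeff_of_mem {G : Set (MvPolynomial (Fin n) K)} {d : ℕ}
    (hG : ∀ g ∈ G, g.IsHomogeneous d) {p : Polynomial (MvPolynomial (Fin n) K)}
    (hp : p ∈ degreeOneAlgebra K G) (k : ℕ) : (p.coeff k).IsHomogeneous (d * k) := by
  induction hp using Algebra.adjoin_induction generalizing k with
  | mem x hx =>
    obtain ⟨g, hg, rfl⟩ := hx
    rw [Polynomial.coeff_monomial]
    split_ifs with h
    · subst h; simpa using hG g hg
    · exact isHomogeneous_zero _ _ _
  | algebraMap r =>
    rw [Polynomial.algebraMap_apply, Polynomial.coeff_C]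
    split_ifs with h
    · subst h; exact isHomogeneous_C _ _
    · exact isHomogeneous_zero _ _ _
  | add x y _ _ hx hy => rw [Polynomial.coeff_add]; exact (hx k).add (hy k)
  | mul x y _ _ hx hy =>
    rw [Polynomial.coeff_mul]
    refine IsHomogeneous.sum _ _ _ fun ij h => ?_
    rw [← Finset.HasAntidiagonal.mem_antidiagonal.mp h, mul_add]
    exact (hx _).mul (hy _)

theorem coeff_mem_of_mem_map {R : Type} [CommRing R] (I m : Ideal R) {p : reesAlgebra I}
    (hp : p ∈ m.map (algebraMap R (reesAlgebra I))) (k : ℕ) :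
    (p : Polynomial R).coeff k ∈ m * I ^ k := by
  rw [Ideal.map] at hp
  induction hp using Submodule.span_induction generalizing k with
  | mem x hx =>
    obtain ⟨a, ha, rfl⟩ := hx
    change (Polynomial.C a).coeff k ∈ _
    rw [Polynomial.coeff_C]
    split_ifs with h
    · subst h; simpa using ha
    · exact zero_mem _
  | zero => simp
  | add x y _ _ hx hy => simpa using add_mem (hx k) (hy k)
  | smul a x _ hx =>
    simp only [smul_eq_mul, MulMemClass.coe_mul, Polynomial.coeff_mul]
    refine Ideal.sum_mem _ fun ij h => ?_
    rw [← Finset.HasAntidiagonal.mem_antidiagonal.mp h, pow_add, mul_left_comm]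
    exact Ideal.mul_mem_mul (a.2 _) (hx _)

theorem eq_zero_of_isHomogeneous_of_mem_pow {p : MvPolynomial (Fin n) K} {e : ℕ}
    (h : p.IsHomogeneous e) (hm : p ∈ idealOfVars (Fin n) K ^ (e + 1)) : p = 0 := by
  rw [mem_pow_idealOfVars_iff] at hm
  by_contra h0
  obtain ⟨x, hx⟩ := support_nonempty.mpr h0
  have h1 := hm x hx
  have h2 := h (mem_support_iff.mp hx)
  rw [Finsupp.degree_eq_weight_one] at h1
  change Finsupp.weight (fun _ => 1) x = e at h2
  omega

theorem mem_pow_of_isHomogeneous {p : MvPolynomial (Fin n) K} {e : ℕ}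
    (h : p.IsHomogeneous e) : p ∈ idealOfVars (Fin n) K ^ e := by
  rw [mem_pow_idealOfVars_iff]
  intro x hx
  have h2 := h (mem_support_iff.mp hx)
  rw [Finsupp.degree_eq_weight_one]
  exact h2.ge

theorem adjoin_gens_eq_rees {R : Type} [CommRing R] (G : Set R) :
    Algebra.adjoin R (Polynomial.monomial 1 '' G) = reesAlgebra (Ideal.span G) := by
  rw [← adjoin_monomial_eq_reesAlgebra, Ideal.span, Submodule.map_span, Algebra.adjoin_span]

/-- Every element of the Rees algebra of `(G)` is congruent modulo `𝔪` to an element of `K[g T : g ∈ G]`: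
the Rees algebra is generated over `S` by the `g T`, and `S = K + 𝔪`. -/
theorem exists_degreeOne_sub_mem (G : Set (MvPolynomial (Fin n) K))
    {p : Polynomial (MvPolynomial (Fin n) K)}
    (hp : p ∈ Algebra.adjoin (MvPolynomial (Fin n) K) (Polynomial.monomial 1 '' G))
    (h : p ∈ reesAlgebra (Ideal.span G)) :
    ∃ (a : Polynomial (MvPolynomial (Fin n) K)) (ha : a ∈ degreeOneAlgebra K G),
      Ideal.Quotient.mk ((idealOfVars (Fin n) K).map
        (algebraMap (MvPolynomial (Fin n) K) (reesAlgebra (Ideal.span G))))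
          ⟨a, degreeOneAlgebra_le_rees G ha⟩ = Ideal.Quotient.mk _ ⟨p, h⟩ := by
  induction hp using Algebra.adjoin_induction with
  | mem x hx => exact ⟨x, Algebra.subset_adjoin hx, rfl⟩
  | algebraMap r =>
    refine ⟨algebraMap K _ (constantCoeff r), Subalgebra.algebraMap_mem _ _, ?_⟩
    rw [Ideal.Quotient.eq]
    have : C (constantCoeff r) - r ∈ idealOfVars (Fin n) K := by
      rw [← pow_one (idealOfVars (Fin n) K), mem_pow_idealOfVars_iff]
      intro x hx
      rw [mem_support_iff] at hx
      by_contra h0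
      have : x = 0 := by simpa [Finsupp.degree_eq_zero_iff] using h0
      subst this
      simp [constantCoeff_eq] at hx
    convert Ideal.mem_map_of_mem (algebraMap (MvPolynomial (Fin n) K)
      (reesAlgebra (Ideal.span G))) this using 1
    rw [map_sub]
    rfl
  | add x y hx hy ihx ihy =>
    rw [adjoin_gens_eq_rees] at hx hy
    obtain ⟨a, ha, hax⟩ := ihx hx
    obtain ⟨b, hb, hby⟩ := ihy hy
    refine ⟨a + b, add_mem ha hb, ?_⟩
    have := congrArg₂ (· + ·) hax hby
    rw [← map_add, ← map_add] at this; exact this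
  | mul x y hx hy ihx ihy =>
    rw [adjoin_gens_eq_rees] at hx hy
    obtain ⟨a, ha, hax⟩ := ihx hx
    obtain ⟨b, hb, hby⟩ := ihy hy
    refine ⟨a * b, mul_mem ha hb, ?_⟩
    have := congrArg₂ (· * ·) hax hby
    rw [← map_mul, ← map_mul] at this; exact this

/-- For generators of the same degree, the fiber cone is `K[g T : g ∈ G]`. Injectivity is a degree count:
the `T^k`-coefficient of an element of `K[g T]` is homogeneous of degree `d * k`, whereas that of an
element of `𝔪 R(I)` lies in `𝔪 ^ (d * k + 1)`. -/
theorem nonempty_degreeOneAlgebra_equiv {G : Set (MvPolynomial (Fin n) K)} {d : ℕ}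
    (hG : ∀ g ∈ G, g.IsHomogeneous d) :
    Nonempty (degreeOneAlgebra K G ≃+* (reesAlgebra (Ideal.span G) ⧸
      (idealOfVars (Fin n) K).map
        (algebraMap (MvPolynomial (Fin n) K) (reesAlgebra (Ideal.span G))))) := by
  let ι : degreeOneAlgebra K G →+* reesAlgebra (Ideal.span G) :=
    (degreeOneAlgebra K G).val.toRingHom.codRestrict (reesAlgebra (Ideal.span G))
      fun x => degreeOneAlgebra_le_rees G x.2
  refine ⟨RingEquiv.ofBijective ((Ideal.Quotient.mk _).comp ι) ⟨?_, ?_⟩⟩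
  · rw [injective_iff_map_eq_zero]
    intro a ha
    have hm : ι a ∈ _ := Ideal.Quotient.eq_zero_iff_mem.mp ha
    apply Subtype.ext
    refine Polynomial.ext fun k => ?_
    refine eq_zero_of_isHomogeneous_of_mem_pow (isHomogeneous_coeff_of_mem hG a.2 k) ?_
    have h1 : Ideal.span G ≤ idealOfVars (Fin n) K ^ d :=
      Ideal.span_le.mpr fun g hg => mem_pow_of_isHomogeneous (hG g hg)
    have h2 := coeff_mem_of_mem_map _ _ hm k
    rw [pow_succ', pow_mul]
    exact Ideal.mul_mono_right (Ideal.pow_right_mono h1 k) h2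
  · intro q
    obtain ⟨⟨p, hp⟩, rfl⟩ := Ideal.Quotient.mk_surjective q
    obtain ⟨a, ha, h⟩ := exists_degreeOne_sub_mem G (by rwa [adjoin_gens_eq_rees]) hp
    exact ⟨⟨a, ha⟩, h⟩

end

/-! ### Setting the largest vertex of each class to 1 -/

theorem fg_finiteType {K : Type} [Field K] {n : ℕ} {G : Set (MvPolynomial (Fin n) K)}
    (hG : G.Finite) : Algebra.FiniteType K (degreeOneAlgebra K G) :=
  (Subalgebra.fg_iff_finiteType _).mp (Subalgebra.fg_def.mpr ⟨_, hG.image _, rfl⟩)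

section
variable {n d : ℕ} (V : Fin d → Finset (Fin n)) (M : Fin d → Fin n)

/-- The vertices of the classes `V j` other than the distinguished vertex `M j` of each class. There are
`r - d` of them when the classes are disjoint. -/
abbrev FreeVertex : Type := {v : Fin n // ∃ j, v ∈ V j ∧ v ≠ M j}

open Classical in
/-- The dehomogenized value of the variable `x_v`: a polynomial variable if `v` is a free vertex, and
`1` otherwise. Only vertices of the hypergraph matter; the value `1` at the others is arbitrary. -/
def vertexValue (K : Type) [Field K] (v : Fin n) : MvPolynomial (Option (FreeVertex V M)) K :=
  if h : ∃ j, v ∈ V j ∧ v ≠ M j then X (some ⟨v, h⟩) else 1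

/-- The `K`-algebra map `S[T] → K[T, x_v : v free]` setting every `x_{M j}` to `1`. The target's
variable `X none` stands for `T`. -/
def dehomogenize (K : Type) [Field K] :
    Polynomial (MvPolynomial (Fin n) K) →ₐ[K] MvPolynomial (Option (FreeVertex V M)) K :=
  Polynomial.eval₂AlgHom (aeval (vertexValue V M K)) (X none) fun _ => Commute.all _ _

/-- Substitution `x_v ↦ x_v / x_{M j}` for a free vertex `v ∈ V j`, and `T ↦ T ∏ j, x_{M j}`, with values
in the fraction field of `S[T]`. It undoes `dehomogenize` on the monomials `x_e T`. -/
def rehomogenize (K : Type) [Field K] :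
    MvPolynomial (Option (FreeVertex V M)) K →ₐ[K]
      FractionRing (Polynomial (MvPolynomial (Fin n) K)) :=
  aeval fun o : Option (FreeVertex V M) => o.elim
    (algebraMap (Polynomial (MvPolynomial (Fin n) K)) _
      (Polynomial.X * ∏ j, Polynomial.C (X (M j))))
    fun v => algebraMap (Polynomial (MvPolynomial (Fin n) K)) _ (Polynomial.C (X v.1)) /
      algebraMap (Polynomial (MvPolynomial (Fin n) K)) _ (Polynomial.C (X (M v.2.choose)))

variable {V M} {K : Type} [Field K]

theorem dehomogenize_gen (e : Fin d → Fin n) :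
    dehomogenize V M K (Polynomial.monomial 1 (∏ j, X (e j))) =
      (∏ j, vertexValue V M K (e j)) * X (none : Option (FreeVertex V M)) := by
  change Polynomial.eval₂ _ _ _ = _
  rw [Polynomial.eval₂_monomial]
  simp

theorem vertexValue_top (huniq : ∀ i j v, v ∈ V i → v ∈ V j → i = j) (hM : ∀ j, M j ∈ V j)
    (j : Fin d) : vertexValue V M K (M j) = 1 := by
  rw [vertexValue, dif_neg]
  rintro ⟨i, hi, hne⟩
  exact hne (by rw [huniq _ _ _ hi (hM j)])

theorem rehomogenize_vertexValue (huniq : ∀ i j v, v ∈ V i → v ∈ V j → i = j)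
    (hM : ∀ j, M j ∈ V j) {j : Fin d} {v : Fin n} (hv : v ∈ V j) :
    rehomogenize V M K (vertexValue V M K v) *
      algebraMap (Polynomial (MvPolynomial (Fin n) K)) _ (Polynomial.C (X (M j))) =
      algebraMap (Polynomial (MvPolynomial (Fin n) K)) _ (Polynomial.C (X v)) := by
  by_cases h : v = M j
  · subst h
    rw [vertexValue_top huniq hM, map_one, one_mul]
  · have hex : ∃ j, v ∈ V j ∧ v ≠ M j := ⟨j, hv, h⟩
    have hj : hex.choose = j := huniq _ _ _ hex.choose_spec.1 hv
    rw [vertexValue, dif_pos hex, rehomogenize, aeval_X]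
    simp only [Option.elim]
    rw [hj, div_mul_cancel₀]
    simp

/-- Setting `x_{M j} = 1` is injective on the toric algebra `K[x_e T]`, since `rehomogenize` is a left
inverse of it on the generators. -/
theorem dehomogenize_injective (G : Set (MvPolynomial (Fin n) K))
    (huniq : ∀ i j v, v ∈ V i → v ∈ V j → i = j) (hM : ∀ j, M j ∈ V j)
    (hG : ∀ g ∈ G, ∃ e : Fin d → Fin n, (∀ j, e j ∈ V j) ∧ g = ∏ j, X (e j)) :
    Function.Injective ((dehomogenize V M K).comp (degreeOneAlgebra K G).val) := by
  have key : degreeOneAlgebra K G ≤ AlgHom.equalizer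
      ((rehomogenize V M K).comp (dehomogenize V M K))
      (IsScalarTower.toAlgHom K _ (FractionRing (Polynomial (MvPolynomial (Fin n) K)))) := by
    refine AlgHom.adjoin_le_equalizer _ _ ?_
    rintro _ ⟨g, hg, rfl⟩
    obtain ⟨e, he, rfl⟩ := hG g hg
    have hT : rehomogenize V M K (X none) = algebraMap (Polynomial (MvPolynomial (Fin n) K)) _
      (Polynomial.X * ∏ j, Polynomial.C (X (M j))) := by simp [rehomogenize]
    rw [AlgHom.comp_apply, dehomogenize_gen, map_mul, hT, map_prod, map_mul, map_prod,
      mul_left_comm, ← Finset.prod_mul_distrib,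
      Finset.prod_congr rfl fun j _ => rehomogenize_vertexValue huniq hM (he j),
      ← map_prod, ← map_prod, ← map_mul, ← Polynomial.C_mul_X_eq_monomial, mul_comm]
    rfl
  intro a b hab
  apply Subtype.ext
  apply IsFractionRing.injective (Polynomial (MvPolynomial (Fin n) K))
    (FractionRing (Polynomial (MvPolynomial (Fin n) K)))
  exact (key a.2).symm.trans ((congrArg (rehomogenize V M K) hab).trans (key b.2))

theorem card_option_freeVertex [Fintype (FreeVertex V M)]
    (huniq : ∀ i j v, v ∈ V i → v ∈ V j → i = j) (hM : ∀ j, M j ∈ V j) :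
    Fintype.card (Option (FreeVertex V M)) = ∑ j, (V j).card - d + 1 := by
  classical
  have h1 : Fintype.card (FreeVertex V M) =
      (Finset.univ.biUnion fun j => (V j).erase (M j)).card :=
    Fintype.card_of_subtype _ fun v => by simp [and_comm]
  rw [Fintype.card_option, h1, Finset.card_biUnion]
  · have h2 : ∑ j, ((V j).erase (M j)).card + d = ∑ j, (V j).card := by
      rw [← Finset.sum_congr rfl fun j _ => Finset.card_erase_add_one (hM j)]
      simp [Finset.sum_add_distrib]
    omega
  · intro i _ j _ hij
    rw [Function.onFun, Finset.disjoint_left]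
    intro v hvi hvj
    exact hij (huniq i j v (Finset.mem_of_mem_erase hvi) (Finset.mem_of_mem_erase hvj))

end

/-- An edge may be switched at any position to a dominating edge `M`. -/
theorem IsSpreadEdge.splice {n d : ℕ} {V : Fin d → Finset (Fin n)} {t : ℕ → ℕ}
    {e M : Fin d → Fin n} (he : IsSpreadEdge n d V t e) (hM : IsSpreadEdge n d V t M)
    (hle : ∀ j, e j ≤ M j) (k : ℕ) :
    IsSpreadEdge n d V t fun i => if (i : ℕ) < k then e i else M i := by
  refine ⟨fun j => ?_, fun j h => ?_⟩
  · dsimp only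
    split_ifs
    exacts [he.1 j, hM.1 j]
  · have h1 := he.2 j h
    have h2 := hM.2 j h
    have h3 : (e ⟨j + 1, h⟩ : ℕ) ≤ M ⟨j + 1, h⟩ := hle _
    dsimp only
    split_ifs <;> omega

/-- Each variable of the target of `dehomogenize` is a quotient of images of elements of
`K[x_e T : e an edge]`. -/
theorem exists_dehomogenize_mul_X {K : Type} [Field K] {n d : ℕ} {V : Fin d → Finset (Fin n)}
    {t : ℕ → ℕ} {M : Fin d → Fin n} (huniq : ∀ i j v, v ∈ V i → v ∈ V j → i = j)
    (hM : IsSpreadEdge n d V t M) (hle : ∀ j, ∀ v ∈ V j, v ≤ M j)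
    (hiso : ∀ (j : Fin d), ∀ v ∈ V j, ∃ e, IsSpreadEdge n d V t e ∧ e j = v)
    (o : Option (FreeVertex V M)) :
    ∃ p ∈ degreeOneAlgebra K (spreadGens K n d V t),
      ∃ q ∈ degreeOneAlgebra K (spreadGens K n d V t),
        p ≠ 0 ∧ dehomogenize V M K p * X o = dehomogenize V M K q := by
  have hgen : ∀ e, IsSpreadEdge n d V t e →
      Polynomial.monomial 1 (∏ j, X (e j)) ∈ degreeOneAlgebra K (spreadGens K n d V t) :=
    fun e he => Algebra.subset_adjoin ⟨_, ⟨e, he, rfl⟩, rfl⟩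
  rcases o with _ | ⟨v, hv⟩
  -- `T` is the image of the generator attached to the edge `M`.
  · refine ⟨1, one_mem _, _, hgen M hM, one_ne_zero, ?_⟩
    rw [map_one, one_mul, dehomogenize_gen]
    simp [vertexValue_top huniq hM.1]
  · obtain ⟨j, hvj, hvM⟩ := id hv
    obtain ⟨e, he, hej⟩ := hiso j v hvj
    have hle' : ∀ j, e j ≤ M j := fun j => hle j _ (he.1 j)
    -- Two edges differing only at position `j`, where they take the values `M j` and `v`.
    have ha := he.splice hM hle' j
    have hb := he.splice hM hle' (j + 1)
    refine ⟨_, hgen _ ha, _, hgen _ hb, ?_, ?_⟩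
    · intro h0
      rw [Polynomial.monomial_eq_zero_iff, Finset.prod_eq_zero_iff] at h0
      obtain ⟨i, -, hi⟩ := h0
      exact X_ne_zero _ hi
    · rw [dehomogenize_gen, dehomogenize_gen,
        mul_right_comm, ← Finset.mul_prod_erase _ _ (Finset.mem_univ j),
        ← Finset.mul_prod_erase Finset.univ (fun i : Fin d => vertexValue V M K
          (if (i : ℕ) < j + 1 then e i else M i)) (Finset.mem_univ j)]
      rw [if_neg (lt_irrefl _), if_pos (Nat.lt_succ_self _), vertexValue_top huniq hM.1, one_mul,
        hej, vertexValue, dif_pos hv, mul_comm (∏ _ ∈ _, _) (X _)]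
      congr 2
      refine Finset.prod_congr rfl fun i hi => ?_
      have : (i : ℕ) ≠ j := fun h => Finset.ne_of_mem_erase hi (Fin.ext h)
      congr 1
      split_ifs <;> first | rfl | omega

/-! ### The analytic spread -/

/-- **Lemma.**  For a complete `𝐭`-spread `d`-partite hypergraph with `r` vertices, the
analytic spread of its edge ideal is `r - d + 1`. -/
theorem analyticSpread_edgeIdeal
    (K : Type) [Field K] (n d : ℕ) (hd : 0 < d)
    (V : Fin d → Finset (Fin n)) (t : ℕ → ℕ)
    (ht : ∀ i, 1 ≤ t i)
    (hV : ∀ i j : Fin d, i < j → ∀ p ∈ V i, ∀ q ∈ V j, (p : ℕ) < (q : ℕ))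
    (hne : ∀ j, (V j).Nonempty)
    (hiso : ∀ (j : Fin d), ∀ v ∈ V j, ∃ e, IsSpreadEdge n d V t e ∧ e j = v)
    (r : ℕ) (hr : r = ∑ j, (V j).card) :
    analyticSpread K n (edgeIdeal K n d V t) = ((r - d + 1 : ℕ) : ℕ∞) := by
  have huniq : ∀ i j v, v ∈ V i → v ∈ V j → i = j := by
    intro i j v hi hj
    rcases lt_trichotomy i j with h | h | h
    · exact absurd (hV i j h v hi v hj) (lt_irrefl _)
    · exact h
    · exact absurd (hV j i h v hj v hi) (lt_irrefl _)
  let M : Fin d → Fin n := fun j => (V j).max' (hne j)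
  have hMV : ∀ j, M j ∈ V j := fun j => (V j).max'_mem (hne j)
  have hle : ∀ j, ∀ v ∈ V j, v ≤ M j := fun j v hv => (V j).le_max' v hv
  -- The largest vertices of the classes form an edge: the successor `e (j + 1)` of `M j` in an edge
  -- through `M j` is at most `M (j + 1)`.
  have hM : IsSpreadEdge n d V t M := by
    refine ⟨hMV, fun j h => ?_⟩
    obtain ⟨e, he, hej⟩ := hiso ⟨j, Nat.lt_of_succ_lt h⟩ _ (hMV _)
    have h1 := he.2 j h
    have h2 : (e ⟨j + 1, h⟩ : ℕ) ≤ M ⟨j + 1, h⟩ := hle _ _ (he.1 _)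
    rw [hej] at h1
    exact h1.trans h2
  have hhom : ∀ g ∈ spreadGens K n d V t, g.IsHomogeneous d := by
    rintro _ ⟨e, -, rfl⟩
    simpa using IsHomogeneous.prod Finset.univ (fun j => (X (e j) : MvPolynomial (Fin n) K))
      (fun _ => 1) fun j _ => isHomogeneous_X K (e j)
  have hfin : (spreadGens K n d V t).Finite :=
    (Set.finite_range fun e : Fin d → Fin n => ∏ j, (X (e j) : MvPolynomial (Fin n) K)).subset
      fun _ ⟨e, _, h⟩ => ⟨e, h.symm⟩
  have := fg_finiteType hfin
  obtain ⟨φ⟩ := nonempty_degreeOneAlgebra_equiv hhom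
  have : Fintype (FreeVertex V M) := Fintype.ofFinite _
  have hinj := dehomogenize_injective (spreadGens K n d V t) huniq hMV
    fun g ⟨e, he, hg⟩ => ⟨e, he.1, hg⟩
  have hdim : ringKrullDim (degreeOneAlgebra K (spreadGens K n d V t)) =
      (Fintype.card (Option (FreeVertex V M)) : ℕ) := by
    refine ringKrullDim_eq_card K (degreeOneAlgebra K (spreadGens K n d V t))
      (Option (FreeVertex V M)) ((dehomogenize V M K).comp (degreeOneAlgebra K _).val) hinj
      fun o => ?_
    obtain ⟨p, hp, q, hq, h0, h⟩ := exists_dehomogenize_mul_X (K := K) huniq hM hle hiso o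
    exact ⟨⟨p, hp⟩, ⟨q, hq⟩, fun h' => h0 (congrArg Subtype.val h'), h⟩
  rw [card_option_freeVertex huniq hMV, ← hr] at hdim
  exact (ringKrullDim_eq_of_ringEquiv φ).symm.trans hdim

end
end
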